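/- Let F_I : ℝ → ℝ be monotone non-decreasing with 0 ≤ F_I(x) ≤ 1 for all x, let ρ be a real number with 0 < ρ ≤ 1, let τ > 0 be a real number with F_I(τ) > 0, and let Δ be a real number with Δ > τ/(F_I(τ)·ρ) and F_I(Δ+τ)·ρ < 1. Then Δ·(F_I(Δ+τ)·ρ)/(1 − F_I(Δ+τ)·ρ) > τ; that is, the tip τ falls below the minimum tip required for immediate inclusion, so by the minimum-tip lemma the producer's best response is delayed inclusion. -/

import Mathlib

/-- Public mempool proposition, minimum-tip form: if `Δ > τ/(F_I(τ)·ρ)` and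
`F_I(Δ+τ)·ρ < 1`, then `Δ·(F_I(Δ+τ)·ρ)/(1 − F_I(Δ+τ)·ρ) > τ`. -/
theorem delayed_inclusion_public_min_tip (F_I : ℝ → ℝ) (hmono : Monotone F_I)
    (hrange : ∀ x, 0 ≤ F_I x ∧ F_I x ≤ 1)
    (ρ : ℝ) (hρ0 : 0 < ρ) (hρ1 : ρ ≤ 1)
    (τ : ℝ) (hτ : 0 < τ) (hFτ : 0 < F_I τ)
    (Δ : ℝ) (hΔ : Δ > τ / (F_I τ * ρ)) (h1 : F_I (Δ + τ) * ρ < 1) :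
    Δ * (F_I (Δ + τ) * ρ) / (1 - F_I (Δ + τ) * ρ) > τ := by
  have hpos : 0 < F_I τ * ρ := mul_pos hFτ hρ0
  have hΔ0 : 0 < Δ := (div_pos hτ hpos).trans hΔ
  have hle : F_I τ * ρ ≤ F_I (Δ + τ) * ρ :=
    mul_le_mul_of_nonneg_right (hmono (by linarith)) hρ0.le
  have hτΔ : τ < Δ * (F_I τ * ρ) := (div_lt_iff₀ hpos).mp hΔ
  rw [gt_iff_lt, lt_div_iff₀ (sub_pos.mpr h1)]
  calc τ * (1 - F_I (Δ + τ) * ρ) ≤ τ := mul_le_of_le_one_right hτ.le (by linarith)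
    _ < Δ * (F_I τ * ρ) := hτΔ
    _ ≤ Δ * (F_I (Δ + τ) * ρ) := mul_le_mul_of_nonneg_left hle hΔ0.le
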